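/- Let a > 0, E_D > E_T be real numbers, let α₁, …, α_N > 0 be the preference parameters of N prosumers, let α = max_n α_n, and suppose b > (α − 2a · log 2 · (E_D − E_T)) / log 2. Set p* = 2a·(E_D − E_T) + b. Then for every prosumer n and every e > 0, the buyer's utility satisfies α_n · log(1 + e)/log 2 − p*·e < 0; hence at the price p* every prosumer's optimal purchase of energy from the centralized power system is zero. -/

import Mathlib

theorem mul_logb_one_add_lt {c α p e : ℝ} (hc : 1 < c) (hp : 0 < p) (hα : α ≤ p * Real.log c)
    (he : 0 < e) : α * Real.logb c (1 + e) < p * e :=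
  calc
    α * Real.logb c (1 + e) ≤ p * Real.log c * Real.logb c (1 + e) :=
      mul_le_mul_of_nonneg_right hα (Real.logb_nonneg hc (by linarith))
    _ = p * Real.log (1 + e) := by
      rw [Real.logb, mul_assoc, mul_div_cancel₀ _ (Real.log_pos hc).ne']
    _ < p * e := by
      have log_lt : Real.log (1 + e) < 1 + e - 1 :=
        Real.log_lt_sub_one_of_pos (by linarith) (by simpa using he.ne')
      rw [add_sub_cancel_left] at log_lt
      exact mul_lt_mul_of_pos_left log_lt hp

/-- The utility `α · log₂ (1 + e) - p · e` of a prosumer with preference parameter `α` who buys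
the amount `e` of energy from the centralized power system at the unit price `p`. -/
noncomputable def buyerUtility (α p e : ℝ) : ℝ :=
  α * Real.logb 2 (1 + e) - p * e

/-- The equilibrium unit price `p*` of the centralized power system, with design parameters `a`
and `b`, at total demand `E_D` and peak threshold `E_T`. -/
def peakPrice (a b E_D E_T : ℝ) : ℝ :=
  2 * a * (E_D - E_T) + b

-- `α / log 2` is the marginal benefit of energy at `e = 0`, and for `0 ≤ α` it only decreases.
theorem buyerUtility_neg {α p e : ℝ} (hp : 0 < p) (hα : α ≤ p * Real.log 2) (he : 0 < e) :
    buyerUtility α p e < 0 :=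
  sub_neg.mpr (mul_logb_one_add_lt one_lt_two hp hα he)

theorem le_peakPrice_mul_log_two_iff {A a b E_D E_T : ℝ} :
    A ≤ peakPrice a b E_D E_T * Real.log 2 ↔
      (A - 2 * a * Real.log 2 * (E_D - E_T)) / Real.log 2 ≤ b := by
  rw [div_le_iff₀ (Real.log_pos one_lt_two), sub_le_iff_le_add, peakPrice]
  ring_nf

theorem all_prosumers_buy_zero_general {ι : Type*} {a b E_D E_T A : ℝ} {αv : ι → ℝ}
    (hA_pos : 0 < A) (hA : ∀ n, αv n ≤ A)
    (hb : (A - 2 * a * Real.log 2 * (E_D - E_T)) / Real.log 2 ≤ b) (n : ι) {e : ℝ} (he : 0 < e) :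
    buyerUtility (αv n) (peakPrice a b E_D E_T) e < 0 := by
  have hA_le : A ≤ peakPrice a b E_D E_T * Real.log 2 := le_peakPrice_mul_log_two_iff.mpr hb
  have price_pos : 0 < peakPrice a b E_D E_T :=
    pos_of_mul_pos_left (hA_pos.trans_le hA_le) (Real.log_pos one_lt_two).le
  exact buyerUtility_neg price_pos ((hA n).trans hA_le) he

/-- At the equilibrium price `p* = 2a·(E_D − E_T) + b`, where
`b > (α − 2a·log 2·(E_D − E_T)) / log 2` with `α = max_n α_n`, every prosumer `n` gets
strictly negative utility from buying any positive amount `e > 0` of energy from the CPS;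
hence every prosumer's optimal grid purchase is zero. -/
theorem all_prosumers_buy_zero (N : ℕ) (hN : 0 < N) (a b E_D E_T : ℝ) (ha : 0 < a)
    (hE : E_T < E_D) (αv : Fin N → ℝ) (hαpos : ∀ n, 0 < αv n) (A : ℝ)
    (hA : A = Finset.univ.sup' (Finset.univ_nonempty_iff.mpr (Fin.pos_iff_nonempty.mp hN)) αv)
    (hb : (A - 2 * a * Real.log 2 * (E_D - E_T)) / Real.log 2 < b)
    (p : ℝ) (hp : p = 2 * a * (E_D - E_T) + b) :
    ∀ n : Fin N, ∀ e : ℝ, 0 < e →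
      αv n * (Real.log (1 + e) / Real.log 2) - p * e < 0 := by
  intro n e he
  have le_A (m : Fin N) : αv m ≤ A := hA ▸ Finset.le_sup' αv (Finset.mem_univ m)
  exact hp ▸ all_prosumers_buy_zero_general ((hαpos n).trans_le (le_A n)) le_A hb.le n he
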